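/- For ℓ odd, ℓ ≥ 7, in the graph H* (K_{ℓ-2} on v_0,...,v_{ℓ-3} colored c(v_iv_j)=i+j plus v_{ℓ-2} joined to v_{ℓ-3} and v_{ℓ-4} with colors 2ℓ-5, 2ℓ-6), the intersection of the color sets of all rainbow Hamiltonian paths starting at v_{ℓ-2} is empty. -/

import Mathlib

/-- Color of the pair `{i,j}`: `i+j` within `K_{ℓ-2}` (indices `≤ ℓ-3`); the two special
edges at `v_{ℓ-2}` (index `ℓ-2`) get colors `2ℓ-5`/`2ℓ-6`. -/
def colFun (ℓ i j : ℕ) : ℕ :=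
  if max i j ≤ ℓ - 3 then min i j + max i j
  else (if min i j = ℓ - 3 then 2*ℓ-5 else 2*ℓ-6)

theorem colFun_symm (ℓ i j : ℕ) : colFun ℓ i j = colFun ℓ j i := by
  unfold colFun; simp only [min_comm i j, max_comm i j]

/-- The edge coloring of `H* = H \ x` as a function on unordered pairs of vertices. -/
def colS (ℓ : ℕ) : Sym2 (Fin (ℓ-1)) → ℕ :=
  Sym2.lift ⟨fun i j => colFun ℓ (i : ℕ) (j : ℕ), fun i j => colFun_symm ℓ i j⟩

/-- The graph `H* = H \ x`: `K_{ℓ-2}` on `v_0,…,v_{ℓ-3}` (indices `0,…,ℓ-3`), plus the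
vertex `v_{ℓ-2}` (index `ℓ-2`) joined to `v_{ℓ-3}` and `v_{ℓ-4}`. -/
def HGstar (ℓ : ℕ) : SimpleGraph (Fin (ℓ-1)) :=
  SimpleGraph.fromRel (fun i j =>
    ((i : ℕ) ≤ ℓ - 3 ∧ (j : ℕ) ≤ ℓ - 3) ∨
    ((i : ℕ) = ℓ - 2 ∧ ((j : ℕ) = ℓ - 3 ∨ (j : ℕ) = ℓ - 4)))

/-!
Every edge of `H*`, including the two special ones, has as color the sum of the indices of its ends,
and any two distinct vertices whose indices differ by at most two are adjacent.
The path `v_n, v_{n-1}, …, v_0`, with `n = ℓ - 2`, is therefore rainbow, and its colors are the odd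
numbers below `2n`. Interchanging `v_a` and `v_{a+1}` in it, where `a + 1 < n`, gives another
rainbow path, in which `2a + 2` replaces the color `2a + 3` and, if `a > 0`, `2a` replaces `2a - 1`.
As `a` varies, each odd color is avoided: `1` by `a = 1`, and `k ≥ 3` by `a = (k - 3) / 2`.
-/

open Equiv Function SimpleGraph

section SequenceWalk

variable {V : Type*} {G : SimpleGraph V} {n : ℕ}

theorem exists_walk_of_forall_adj (f : Fin (n + 1) → V)
    (hadj : ∀ i : Fin n, G.Adj (f i.succ) (f i.castSucc)) :
    ∃ (w : V) (p : G.Walk (f (Fin.last n)) w),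
      p.support = (List.finRange (n + 1)).reverse.map f ∧
        p.edges = (List.finRange n).reverse.map fun i => s(f i.succ, f i.castSucc) := by
  induction n with
  | zero => exact ⟨_, .nil, by simp [List.finRange_succ], by simp⟩
  | succ n ih =>
    obtain ⟨w, p, hsupport, hedges⟩ := ih (fun i => f i.castSucc) fun i => hadj i.castSucc
    refine ⟨w, .cons (hadj (Fin.last n)) p, ?_, ?_⟩
    · rw [Walk.support_cons, hsupport, List.finRange_succ_last (n := n + 1)]
      simp
    · rw [Walk.edges_cons, hedges, List.finRange_succ_last (n := n)]
      simp

theorem exists_isHamiltonian_walk_of_forall_adj [DecidableEq V] {f : Fin (n + 1) → V}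
    (hf : Bijective f) (hadj : ∀ i : Fin n, G.Adj (f i.succ) (f i.castSucc)) :
    ∃ (w : V) (p : G.Walk (f (Fin.last n)) w), p.IsHamiltonian ∧
      p.edges = (List.finRange n).reverse.map fun i => s(f i.succ, f i.castSucc) := by
  obtain ⟨w, p, hsupport, hedges⟩ := exists_walk_of_forall_adj f hadj
  have hpath : p.IsPath := by
    rw [Walk.isPath_def, hsupport]
    exact (List.nodup_reverse.2 (List.nodup_finRange _)).map hf.injective
  refine ⟨w, p, hpath.isHamiltonian_of_mem fun v => ?_, hedges⟩
  simpa [hsupport] using hf.surjective v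

end SequenceWalk

section HGstar

variable {ℓ : ℕ} {u v : Fin (ℓ - 1)}

theorem hGstar_adj_of_le_add_two (hne : u ≠ v) (huv : (u : ℕ) ≤ v + 2) (hvu : (v : ℕ) ≤ u + 2) :
    (HGstar ℓ).Adj u v := by
  rw [HGstar, fromRel_adj]
  refine ⟨hne, ?_⟩
  rw [ne_eq, Fin.ext_iff] at hne
  omega

theorem colS_eq_add_of_adj (h : (HGstar ℓ).Adj u v) : colS ℓ s(u, v) = u + v := by
  rw [HGstar, fromRel_adj, ne_eq, Fin.ext_iff] at h
  simp only [colS, Sym2.lift_mk, colFun]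
  split_ifs <;> omega

end HGstar

section RainbowOrder

variable {n : ℕ}

/-- The index sum along the step from `v_{σ (i+1)}` to `v_{σ i}` of the path visiting
`v_{σ n}, …, v_{σ 0}` in this order; on an edge of `HGstar (n + 2)` this is its color. -/
def stepSum (σ : Perm (Fin (n + 1))) (i : Fin n) : ℕ := σ i.succ + σ i.castSucc

/-- The permutations `σ` for which `v_{σ n}, …, v_{σ 0}` is a rainbow Hamiltonian path of
`H*` starting at `v_n`, where `n = ℓ - 2`. Indices decrease along the path so that `σ = 1` is the
path `v_n, v_{n-1}, …, v_0`. -/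
structure IsRainbowOrder (σ : Perm (Fin (n + 1))) : Prop where
  map_last : σ (Fin.last n) = Fin.last n
  adj (i : Fin n) : (HGstar (n + 2)).Adj (σ i.succ) (σ i.castSucc)
  stepSum_injective : Injective (stepSum σ)

theorem IsRainbowOrder.exists_walk {σ : Perm (Fin (n + 1))} (hσ : IsRainbowOrder σ) :
    ∃ (w : Fin (n + 1)) (p : (HGstar (n + 2)).Walk (Fin.last n) w), p.IsHamiltonian ∧
      p.edges.map (colS (n + 2)) = (List.finRange n).reverse.map (stepSum σ) := by
  obtain ⟨w, p, hham, hedges⟩ := exists_isHamiltonian_walk_of_forall_adj σ.bijective hσ.adj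
  refine hσ.map_last ▸ ⟨w, p, hham, ?_⟩
  rw [hedges, List.map_map]
  exact List.map_congr_left fun i _ => colS_eq_add_of_adj (hσ.adj i)

theorem stepSum_one (i : Fin n) : stepSum 1 i = 2 * i + 1 := by
  simp only [stepSum, Perm.one_apply, Fin.val_succ, Fin.val_castSucc]
  omega

theorem isRainbowOrder_one : IsRainbowOrder (1 : Perm (Fin (n + 1))) where
  map_last := rfl
  adj i := by
    apply hGstar_adj_of_le_add_two Fin.castSucc_lt_succ.ne'
    all_goals
      simp only [Perm.one_apply, Fin.val_succ, Fin.val_castSucc]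
      omega
  stepSum_injective i j h := by
    simp only [stepSum_one] at h
    omega

theorem val_swap_castSucc_succ (a : Fin n) (i : Fin (n + 1)) :
    (swap a.castSucc a.succ i : ℕ) =
      if (i : ℕ) = a then (a + 1 : ℕ) else if (i : ℕ) = a + 1 then (a : ℕ) else i := by
  simp only [swap_apply_def, Fin.ext_iff, Fin.val_castSucc, Fin.val_succ]
  split_ifs <;> simp

theorem stepSum_swap (a i : Fin n) :
    stepSum (swap a.castSucc a.succ) i =
      if (i : ℕ) + 1 = a then (2 * a : ℕ)
      else if i = a then (2 * a + 1 : ℕ)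
      else if (i : ℕ) = a + 1 then (2 * a + 2 : ℕ)
      else 2 * i + 1 := by
  simp only [stepSum, val_swap_castSucc_succ, Fin.val_succ, Fin.val_castSucc, Fin.ext_iff]
  split_ifs <;> omega

theorem isRainbowOrder_swap {a : Fin n} (ha : (a : ℕ) + 1 < n) :
    IsRainbowOrder (swap a.castSucc a.succ) where
  map_last := by
    ext
    rw [val_swap_castSucc_succ, Fin.val_last]
    split_ifs <;> omega
  adj i := by
    apply hGstar_adj_of_le_add_two
    · exact (Equiv.injective _).ne Fin.castSucc_lt_succ.ne'
    all_goals
      simp only [val_swap_castSucc_succ, Fin.val_succ, Fin.val_castSucc]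
      split_ifs <;> omega
  stepSum_injective i j h := by
    simp only [stepSum_swap] at h
    split_ifs at h <;> omega

theorem stepSum_swap_ne (a i : Fin n) {k : ℕ} (hk : k + 1 = 2 * a ∨ k = 2 * a + 3) :
    stepSum (swap a.castSucc a.succ) i ≠ k := by
  rw [stepSum_swap]
  split_ifs <;> omega

theorem exists_isRainbowOrder_forall_stepSum_ne (hn : 3 ≤ n) (k : ℕ) :
    ∃ σ : Perm (Fin (n + 1)), IsRainbowOrder σ ∧ ∀ i, stepSum σ i ≠ k := by
  by_cases h : Odd k ∧ k < 2 * n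
  · obtain ⟨⟨b, rfl⟩, hb⟩ := h
    obtain ⟨a, ha, hab⟩ : ∃ a, a + 1 < n ∧ (2 * b + 1 + 1 = 2 * a ∨ 2 * b + 1 = 2 * a + 3) := by
      obtain rfl | hb0 := Nat.eq_zero_or_pos b
      · exact ⟨1, by omega, by omega⟩
      · exact ⟨b - 1, by omega, by omega⟩
    exact ⟨_, isRainbowOrder_swap (a := ⟨a, by omega⟩) ha, fun i => stepSum_swap_ne _ i hab⟩
  · refine ⟨1, isRainbowOrder_one, fun i hi => h ?_⟩
    rw [stepSum_one] at hi
    exact ⟨⟨i, hi.symm⟩, by omega⟩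

end RainbowOrder

theorem stmt12_general (ℓ : ℕ) (hℓ : 5 ≤ ℓ) :
    {k : ℕ | ∀ (w : Fin (ℓ-1)) (p : (HGstar ℓ).Walk ⟨ℓ-2, by omega⟩ w),
        p.IsHamiltonian → (p.edges.map (colS ℓ)).Nodup →
        k ∈ p.edges.map (colS ℓ)} = ∅ := by
  obtain ⟨n, rfl⟩ := Nat.exists_eq_add_of_le' (show 2 ≤ ℓ by omega)
  refine Set.eq_empty_of_forall_notMem fun k hk => ?_
  obtain ⟨σ, hσ, havoid⟩ := exists_isRainbowOrder_forall_stepSum_ne (n := n) (by omega) k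
  obtain ⟨w, p, hham, hcolors⟩ := hσ.exists_walk
  have hrainbow : (p.edges.map (colS (n + 2))).Nodup := by
    rw [hcolors]
    exact (List.nodup_reverse.2 (List.nodup_finRange n)).map hσ.stepSum_injective
  have hmem : k ∈ p.edges.map (colS (n + 2)) := hk w p hham hrainbow
  obtain ⟨i, -, hi⟩ := List.mem_map.1 (hcolors ▸ hmem)
  exact havoid i hi

/-- for odd `ℓ ≥ 7`, the intersection of the color sets of all rainbow
Hamiltonian paths of `H*` starting at `v_{ℓ-2}` is empty. -/
theorem stmt12 (ℓ : ℕ) (hℓ : 7 ≤ ℓ) (hodd : Odd ℓ) :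
    {k : ℕ | ∀ (w : Fin (ℓ-1)) (p : (HGstar ℓ).Walk ⟨ℓ-2, by omega⟩ w),
        p.IsHamiltonian → (p.edges.map (colS ℓ)).Nodup →
        k ∈ p.edges.map (colS ℓ)} = ∅ :=
  stmt12_general ℓ (by omega)
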